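/- Let M ∈ ℝ^{3×3} be symmetric and let M̄ := Tr(M)·I₃ − M. Then for every ρ ∈ ℝ³, with R_ρ(ρ) := (1/(1+‖ρ‖²))·((1−‖ρ‖²)I₃ + 2ρρᵀ + 2[ρ]×), one has vex(P_a(M·R_ρ(ρ))) = (1/(1+‖ρ‖²))·(I₃ − [ρ]×)·M̄·ρ. -/

import Mathlib

open Matrix

noncomputable section

/-- The skew-symmetric matrix `[x]×` associated to `x ∈ ℝ³`. -/
def skew (x : Fin 3 → ℝ) : Matrix (Fin 3) (Fin 3) ℝ :=
  !![0, -x 2, x 1; x 2, 0, -x 0; -x 1, x 0, 0]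

/-- The anti-symmetric projection `P_a(A) = (A - Aᵀ)/2`. -/
def Pa (A : Matrix (Fin 3) (Fin 3) ℝ) : Matrix (Fin 3) (Fin 3) ℝ :=
  (1/2 : ℝ) • (A - Aᵀ)

/-- `vex(P_a(A)) = (1/2)(A₃₂−A₂₃, A₁₃−A₃₁, A₂₁−A₁₂)`. -/
def vexPa (A : Matrix (Fin 3) (Fin 3) ℝ) : Fin 3 → ℝ :=
  ![(1/2) * (A 2 1 - A 1 2), (1/2) * (A 0 2 - A 2 0), (1/2) * (A 1 0 - A 0 1)]

/-- Normalized Euclidean distance `‖A‖_I = (1/4)Tr(I₃ − A)`. -/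
def normI (A : Matrix (Fin 3) (Fin 3) ℝ) : ℝ :=
  (1/4) * (1 - A).trace

/-- The Rodriguez-parameter rotation matrix (eq. (65)). -/
def rodr (ρ : Fin 3 → ℝ) : Matrix (Fin 3) (Fin 3) ℝ :=
  (1/(1 + ρ ⬝ᵥ ρ)) • ((1 - ρ ⬝ᵥ ρ) • (1 : Matrix (Fin 3) (Fin 3) ℝ)
    + (2:ℝ) • vecMulVec ρ ρ + (2:ℝ) • skew ρ)

/-!
`vexPa` is linear, so `vexPa (M * rodr ρ)` splits along the three summands of the Rodriguez
formula: the identity contributes a multiple of `vexPa M`, the dyad `ρρᵀ` contributes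
`½ ρ × Mρ`, and `[ρ]×` contributes `½ (Tr(M)I₃ - Mᵀ)ρ`. Since `ρ × ρ = 0`, the vector `ρ × Mρ` is
`-[ρ]×(Tr(M)I₃ - M)ρ`. Exchanging `Mᵀ` for `M` in the last contribution costs
`(M - Mᵀ)ρ = 2 vexPa M × ρ`, and `vexPa M` vanishes for symmetric `M`.
-/

section Skew

variable (A : Matrix (Fin 3) (Fin 3) ℝ) (u v : Fin 3 → ℝ)

theorem skew_mulVec : skew u *ᵥ v = u ⨯₃ v := by
  rw [cross_apply]
  ext i
  fin_cases i <;> simp [skew, mulVec, dotProduct, Fin.sum_univ_three] <;> ring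

theorem skew_vexPa : skew (vexPa A) = Pa A := by
  ext i j
  fin_cases i <;> fin_cases j <;> simp [skew, vexPa, Pa] <;> ring

theorem sub_transpose_mulVec : (A - Aᵀ) *ᵥ v = (2 : ℝ) • vexPa A ⨯₃ v := by
  rw [← skew_mulVec, skew_vexPa, Pa, smul_mulVec, smul_smul]
  norm_num

theorem one_sub_skew_mul_trace_smul_one_sub_mulVec :
    ((1 - skew v) * (A.trace • (1 : Matrix (Fin 3) (Fin 3) ℝ) - A)) *ᵥ v =
      (A.trace • (1 : Matrix (Fin 3) (Fin 3) ℝ) - A) *ᵥ v + v ⨯₃ (A *ᵥ v) := by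
  have skew_part : skew v *ᵥ ((A.trace • (1 : Matrix (Fin 3) (Fin 3) ℝ) - A) *ᵥ v) =
      -(v ⨯₃ (A *ᵥ v)) := by
    rw [skew_mulVec, sub_mulVec, smul_mulVec, one_mulVec, map_sub, map_smul, cross_self, smul_zero,
      zero_sub]
  rw [← mulVec_mulVec, sub_mulVec 1, one_mulVec, skew_part, sub_neg_eq_add]

end Skew

section VexPa

variable (A B : Matrix (Fin 3) (Fin 3) ℝ)

theorem vexPa_add : vexPa (A + B) = vexPa A + vexPa B := by
  ext i
  fin_cases i <;> simp [vexPa] <;> ring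

theorem vexPa_smul (c : ℝ) : vexPa (c • A) = c • vexPa A := by
  ext i
  fin_cases i <;> simp [vexPa] <;> ring

variable {A} in
theorem vexPa_eq_zero_of_isSymm (hA : A.IsSymm) : vexPa A = 0 := by
  ext i
  fin_cases i <;> simp [vexPa, hA.apply 0 1, hA.apply 0 2, hA.apply 1 2]

theorem vexPa_vecMulVec (u v : Fin 3 → ℝ) :
    vexPa (vecMulVec u v) = (1 / 2 : ℝ) • v ⨯₃ u := by
  rw [cross_apply]
  ext i
  fin_cases i <;> simp [vexPa, vecMulVec_apply] <;> ring

theorem vexPa_mul_skew (x : Fin 3 → ℝ) :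
    vexPa (A * skew x) =
      (1 / 2 : ℝ) • ((A.trace • (1 : Matrix (Fin 3) (Fin 3) ℝ) - Aᵀ) *ᵥ x) := by
  rw [sub_mulVec, smul_mulVec, one_mulVec, trace_fin_three]
  ext i
  fin_cases i <;> simp [vexPa, skew, mul_apply, mulVec, dotProduct, Fin.sum_univ_three] <;> ring

end VexPa

theorem vexPa_mul_rodr (M : Matrix (Fin 3) (Fin 3) ℝ) (ρ : Fin 3 → ℝ) :
    vexPa (M * rodr ρ) = (1 / (1 + ρ ⬝ᵥ ρ)) • ((1 - ρ ⬝ᵥ ρ) • vexPa M + ρ ⨯₃ (M *ᵥ ρ) +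
      (M.trace • (1 : Matrix (Fin 3) (Fin 3) ℝ) - Mᵀ) *ᵥ ρ) := by
  simp only [rodr, Matrix.mul_smul, Matrix.mul_add, Matrix.mul_one, mul_vecMulVec, vexPa_smul,
    vexPa_add, vexPa_vecMulVec, vexPa_mul_skew, smul_smul]
  norm_num

theorem vexPa_M_rodr_general (M : Matrix (Fin 3) (Fin 3) ℝ) (ρ : Fin 3 → ℝ) :
    vexPa (M * rodr ρ) = (1 / (1 + ρ ⬝ᵥ ρ)) •
      ((1 - ρ ⬝ᵥ ρ) • vexPa M + (2 : ℝ) • vexPa M ⨯₃ ρ +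
        ((1 - skew ρ) * (M.trace • (1 : Matrix (Fin 3) (Fin 3) ℝ) - M)) *ᵥ ρ) := by
  rw [vexPa_mul_rodr, one_sub_skew_mul_trace_smul_one_sub_mulVec, ← sub_transpose_mulVec]
  simp only [sub_mulVec]
  congr 1
  abel

/-- eq. (75): for symmetric `M` with `M̄ = Tr(M)I₃ − M`,
`vex(P_a(M·R_ρ(ρ))) = (1/(1+‖ρ‖²))(I₃ − [ρ]×)M̄ρ`. -/
theorem vexPa_M_rodr (M : Matrix (Fin 3) (Fin 3) ℝ) (hM : M.IsSymm)
    (ρ : Fin 3 → ℝ) :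
    vexPa (M * rodr ρ)
      = (1/(1 + ρ ⬝ᵥ ρ))
          • (((1 - skew ρ) * (M.trace • (1 : Matrix (Fin 3) (Fin 3) ℝ) - M)) *ᵥ ρ) := by
  rw [vexPa_M_rodr_general, vexPa_eq_zero_of_isSymm hM]
  simp
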